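/- For the linear time-invariant system ȧ = La + Bf, y = Ca + Df with L Hurwitz: for every p ∈ [1,∞), every τ > 0, every continuous input f : [0,∞) → ℝⁿ, and every continuously differentiable solution a : [0,τ] → ℝⁿ with a(0) = a₀, the truncated output y_τ satisfies ‖y_τ‖_{Lp} ≤ γ_cor‖f_τ‖_{Lp} + β_cor, where γ_cor = ‖D‖₂ + 2λmax²(P_cor)‖B‖₂‖C‖₂/λmin(P_cor) and β_cor = (2λmax(P_cor)/p)^{1/p}‖C‖₂‖a₀‖√(λmax(P_cor)/λmin(P_cor)), P_cor being the symmetric positive definite solution of the Lyapunov equation P_cor L + Lᵀ P_cor = −I. -/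

import Mathlib

/-! With `V(a) = aᵀ P a`, the Lyapunov equation gives `V' = -‖a‖² + 2 aᵀ P B f` along trajectories.
Hence, by Cauchy–Schwarz for the inner product of `P` and `V ≤ λmax ‖a‖²`, the function `√V`
satisfies `(√V)' ≤ -α √V + √λmax ‖B‖ ‖f‖` with `α = 1 / (2 λmax)` (`sqrt_quad_le`, where the
square root is regularised). So `√V` is dominated by `e^{-αt} √V(0) + √λmax ‖B‖ u`, where `u`
solves the scalar equation `u' = -α u + ‖f‖`, `u(0) = 0` (`comparison`).

The `Lᵖ` norm of `e^{-αt}` is at most `(1 / (α p))^{1/p}` (`lpN_exp_le`). The bound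
`‖u‖_p ≤ ‖f‖_p / α` (`lpN_scal_le`) needs no convolution inequality: integrate the derivative of
`uᵖ` and use Young's inequality on `uᵖ⁻¹ ‖f‖`. Minkowski's inequality for
`‖y‖ ≤ ‖C‖ ‖a‖ + ‖D‖ ‖f‖` and `√λmin ‖a‖ ≤ √V` then give the claim, with the constant
`√(λmax / λmin)` in the gain weakened to `λmax / λmin`. -/

noncomputable section

open Matrix Set MeasureTheory

/-- Euclidean norm on `Fin n → ℝ`. -/
def eNorm {n : ℕ} (a : Fin n → ℝ) : ℝ := Real.sqrt (∑ i, a i ^ 2)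

/-- Truncation of a signal: equals `g` on `(-∞, τ]` (in particular on `[0, τ]`) and `0` for `t > τ`. -/
def trunc {E : Type*} [Zero E] (τ : ℝ) (g : ℝ → E) : ℝ → E := fun t => if t ≤ τ then g t else 0

/-- The `L∞` norm of a vector-valued signal on `[0, ∞)`: `sup_{t ≥ 0} ‖g t‖`. -/
def eLinf {n : ℕ} (g : ℝ → Fin n → ℝ) : ℝ := ⨆ t : Set.Ici (0:ℝ), eNorm (g t.1)

/-- The `Lp` norm of a vector-valued signal on `[0, ∞)`: `(∫₀^∞ ‖g t‖^p dt)^(1/p)`. -/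
def eLp {n : ℕ} (p : ℝ) (g : ℝ → Fin n → ℝ) : ℝ :=
  (∫ t in Set.Ioi (0:ℝ), eNorm (g t) ^ p) ^ (1/p)

/-- Smallest eigenvalue of a symmetric matrix, via its Rayleigh quotient characterization. -/
def lamMin {n : ℕ} (P : Matrix (Fin n) (Fin n) ℝ) : ℝ :=
  sInf {r | ∃ a : Fin n → ℝ, eNorm a = 1 ∧ r = a ⬝ᵥ P.mulVec a}

/-- Largest eigenvalue of a symmetric matrix, via its Rayleigh quotient characterization. -/
def lamMax {n : ℕ} (P : Matrix (Fin n) (Fin n) ℝ) : ℝ :=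
  sSup {r | ∃ a : Fin n → ℝ, eNorm a = 1 ∧ r = a ⬝ᵥ P.mulVec a}

/-- Spectral norm of a matrix: the induced Euclidean operator norm. -/
def specNorm {n : ℕ} (M : Matrix (Fin n) (Fin n) ℝ) : ℝ :=
  sSup {r | ∃ a : Fin n → ℝ, eNorm a = 1 ∧ r = eNorm (M.mulVec a)}

/-- The real quadratic form `aᵀ P a`. -/
def quad {n : ℕ} (P : Matrix (Fin n) (Fin n) ℝ) (a : Fin n → ℝ) : ℝ := a ⬝ᵥ P.mulVec a

/-! ### The Euclidean norm, the spectral norm and the extreme eigenvalues -/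

lemma eNorm_eq_norm {n : ℕ} (a : Fin n → ℝ) : eNorm a = ‖WithLp.toLp 2 a‖ := by
  rw [EuclideanSpace.norm_eq]
  simp [eNorm]

lemma eNorm_nonneg {n : ℕ} (a : Fin n → ℝ) : 0 ≤ eNorm a := Real.sqrt_nonneg _

lemma eNorm_zero {n : ℕ} : eNorm (0 : Fin n → ℝ) = 0 := by simp [eNorm]

lemma eNorm_eq_zero {n : ℕ} {a : Fin n → ℝ} (h : eNorm a = 0) : a = 0 := by
  rw [eNorm_eq_norm, norm_eq_zero] at h
  simpa using h

lemma eNorm_sq {n : ℕ} (a : Fin n → ℝ) : eNorm a ^ 2 = a ⬝ᵥ a := by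
  rw [eNorm, Real.sq_sqrt (Finset.sum_nonneg fun i _ => sq_nonneg _)]
  simp [dotProduct, sq]

lemma eNorm_add_le {n : ℕ} (a b : Fin n → ℝ) : eNorm (a + b) ≤ eNorm a + eNorm b := by
  simp only [eNorm_eq_norm, WithLp.toLp_add]
  exact norm_add_le _ _

lemma eNorm_smul {n : ℕ} (c : ℝ) (a : Fin n → ℝ) : eNorm (c • a) = |c| * eNorm a := by
  simp only [eNorm_eq_norm, WithLp.toLp_smul, norm_smul, Real.norm_eq_abs]

lemma continuous_eNorm {n : ℕ} : Continuous (eNorm : (Fin n → ℝ) → ℝ) := by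
  unfold eNorm
  fun_prop

lemma isCompact_eNorm_sphere {n : ℕ} : IsCompact {a : Fin n → ℝ | eNorm a = 1} := by
  refine Metric.isCompact_of_isClosed_isBounded
    (isClosed_eq continuous_eNorm continuous_const) ?_
  refine (Metric.isBounded_closedBall (x := (0 : Fin n → ℝ)) (r := 1)).subset fun a ha => ?_
  rw [mem_closedBall_zero_iff, pi_norm_le_iff_of_nonneg zero_le_one]
  intro i
  have h := PiLp.norm_apply_le (WithLp.toLp 2 a) i
  rw [← eNorm_eq_norm, show eNorm a = 1 from ha] at h
  exact h

lemma exists_unit {n : ℕ} {a : Fin n → ℝ} (ha : a ≠ 0) :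
    ∃ e : Fin n → ℝ, eNorm e = 1 ∧ a = eNorm a • e := by
  have h : eNorm a ≠ 0 := fun h => ha (eNorm_eq_zero h)
  refine ⟨(eNorm a)⁻¹ • a, ?_, ?_⟩
  · rw [eNorm_smul, abs_of_nonneg (inv_nonneg.2 (eNorm_nonneg a)), inv_mul_cancel₀ h]
  · rw [smul_smul, mul_inv_cancel₀ h, one_smul]

lemma setOf_unit_eq_image {n : ℕ} (φ : (Fin n → ℝ) → ℝ) :
    {r | ∃ a : Fin n → ℝ, eNorm a = 1 ∧ r = φ a} = φ '' {a | eNorm a = 1} := by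
  ext r
  simp [eq_comm]

lemma isCompact_unit_values {n : ℕ} {φ : (Fin n → ℝ) → ℝ} (hφ : Continuous φ) :
    IsCompact {r | ∃ a : Fin n → ℝ, eNorm a = 1 ∧ r = φ a} := by
  rw [setOf_unit_eq_image]
  exact isCompact_eNorm_sphere.image hφ

lemma continuous_quad {n : ℕ} (P : Matrix (Fin n) (Fin n) ℝ) : Continuous (quad P) := by
  unfold quad
  fun_prop

lemma specNorm_nonneg {n : ℕ} (M : Matrix (Fin n) (Fin n) ℝ) : 0 ≤ specNorm M := by
  apply Real.sSup_nonneg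
  rintro r ⟨a, -, rfl⟩
  exact eNorm_nonneg _

lemma eNorm_mulVec_le {n : ℕ} (M : Matrix (Fin n) (Fin n) ℝ) (a : Fin n → ℝ) :
    eNorm (M.mulVec a) ≤ specNorm M * eNorm a := by
  by_cases ha : a = 0
  · simp [ha, eNorm_zero]
  obtain ⟨e, he, hae⟩ := exists_unit ha
  have hφ : Continuous fun a : Fin n → ℝ => eNorm (M.mulVec a) :=
    continuous_eNorm.comp (by fun_prop)
  have h : eNorm (M.mulVec e) ≤ specNorm M :=
    le_csSup (isCompact_unit_values hφ).bddAbove ⟨e, he, rfl⟩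
  calc eNorm (M.mulVec a) = eNorm (M.mulVec e) * eNorm a := by
        conv_lhs => rw [hae]
        rw [mulVec_smul, eNorm_smul, abs_of_nonneg (eNorm_nonneg a), mul_comm]
    _ ≤ _ := mul_le_mul_of_nonneg_right h (eNorm_nonneg a)

lemma quad_smul {n : ℕ} (P : Matrix (Fin n) (Fin n) ℝ) (c : ℝ) (a : Fin n → ℝ) :
    quad P (c • a) = quad P a * c ^ 2 := by
  simp [quad, mulVec_smul]
  ring

lemma quad_le {n : ℕ} (P : Matrix (Fin n) (Fin n) ℝ) (a : Fin n → ℝ) :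
    quad P a ≤ lamMax P * eNorm a ^ 2 := by
  by_cases ha : a = 0
  · simp [ha, eNorm_zero, quad]
  obtain ⟨e, he, hae⟩ := exists_unit ha
  have h : quad P e ≤ lamMax P :=
    le_csSup (isCompact_unit_values (continuous_quad P)).bddAbove ⟨e, he, rfl⟩
  conv_lhs => rw [hae]
  rw [quad_smul]
  exact mul_le_mul_of_nonneg_right h (sq_nonneg _)

lemma le_quad {n : ℕ} (P : Matrix (Fin n) (Fin n) ℝ) (a : Fin n → ℝ) :
    lamMin P * eNorm a ^ 2 ≤ quad P a := by
  by_cases ha : a = 0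
  · simp [ha, eNorm_zero, quad]
  obtain ⟨e, he, hae⟩ := exists_unit ha
  have h : lamMin P ≤ quad P e :=
    csInf_le (isCompact_unit_values (continuous_quad P)).bddBelow ⟨e, he, rfl⟩
  conv_rhs => rw [hae]
  rw [quad_smul]
  exact mul_le_mul_of_nonneg_right h (sq_nonneg _)

lemma quad_nonneg {n : ℕ} {P : Matrix (Fin n) (Fin n) ℝ} (hP : P.PosDef) (a : Fin n → ℝ) :
    0 ≤ quad P a := by
  by_cases ha : a = 0
  · simp [ha, quad]
  · have h := hP.dotProduct_mulVec_pos ha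
    rw [star_trivial] at h
    exact h.le

lemma exists_eNorm_eq_one {n : ℕ} (hn : 0 < n) : ∃ a : Fin n → ℝ, eNorm a = 1 := by
  refine ⟨Pi.single ⟨0, hn⟩ 1, ?_⟩
  simp [eNorm, Pi.single_apply]

/-- The smallest eigenvalue is positive because the infimum defining it is attained on the
compact unit sphere. -/
lemma lamMin_pos {n : ℕ} (hn : 0 < n) {P : Matrix (Fin n) (Fin n) ℝ} (hP : P.PosDef) :
    0 < lamMin P := by
  obtain ⟨e, he⟩ := exists_eNorm_eq_one hn
  obtain ⟨a, ha, h⟩ := (isCompact_unit_values (continuous_quad P)).sInf_mem ⟨quad P e, e, he, rfl⟩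
  have ha0 : a ≠ 0 := by
    rintro rfl
    simp [eNorm_zero] at ha
  have hpos := hP.dotProduct_mulVec_pos ha0
  rw [star_trivial] at hpos
  exact hpos.trans_eq h.symm

lemma lamMin_le_lamMax {n : ℕ} (hn : 0 < n) (P : Matrix (Fin n) (Fin n) ℝ) :
    lamMin P ≤ lamMax P := by
  obtain ⟨e, he⟩ := exists_eNorm_eq_one hn
  have h1 := le_quad P e
  have h2 := quad_le P e
  rw [he] at h1 h2
  linarith

lemma dotProduct_mulVec_comm {n : ℕ} {P : Matrix (Fin n) (Fin n) ℝ} (hPsym : Pᵀ = P)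
    (a b : Fin n → ℝ) : b ⬝ᵥ P.mulVec a = a ⬝ᵥ P.mulVec b := by
  rw [dotProduct_comm, dotProduct_mulVec a, ← mulVec_transpose, hPsym]

/-- Cauchy–Schwarz for the inner product `aᵀ P b`, with the second factor bounded through the
largest eigenvalue. -/
lemma dotProduct_mulVec_le {n : ℕ} {P : Matrix (Fin n) (Fin n) ℝ} (hPsym : Pᵀ = P)
    (hP : P.PosDef) (a b : Fin n → ℝ) :
    a ⬝ᵥ P.mulVec b ≤ √(quad P a) * (√(lamMax P) * eNorm b) := by
  have hd : discrim (quad P b) (2 * (a ⬝ᵥ P.mulVec b)) (quad P a) ≤ 0 := by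
    apply discrim_le_zero
    intro x
    have h := quad_nonneg hP (a + x • b)
    have e : quad P (a + x • b)
        = quad P b * (x * x) + 2 * (a ⬝ᵥ P.mulVec b) * x + quad P a := by
      have hc := dotProduct_mulVec_comm hPsym a b
      simp only [quad, mulVec_add, mulVec_smul, dotProduct_add, add_dotProduct,
        smul_dotProduct, dotProduct_smul, smul_eq_mul, hc]
      ring
    rwa [e] at h
  rw [discrim] at hd
  have h1 : a ⬝ᵥ P.mulVec b ≤ √(quad P a) * √(quad P b) := by
    rw [← Real.sqrt_mul (quad_nonneg hP a)]
    apply Real.le_sqrt_of_sq_le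
    linarith
  refine h1.trans (mul_le_mul_of_nonneg_left ?_ (Real.sqrt_nonneg _))
  have h2 := Real.sqrt_le_sqrt (quad_le P b)
  rwa [Real.sqrt_mul' _ (sq_nonneg _), Real.sqrt_sq (eNorm_nonneg b)] at h2

/-- The Lyapunov equation: the derivative of `aᵀ P a` along `L a` is `-‖a‖²`. -/
lemma lyapunov_dotProduct {n : ℕ} {L P : Matrix (Fin n) (Fin n) ℝ} (hPsym : Pᵀ = P)
    (hLyap : P * L + Lᵀ * P = -(1 : Matrix (Fin n) (Fin n) ℝ)) (a : Fin n → ℝ) :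
    2 * (a ⬝ᵥ P.mulVec (L.mulVec a)) = -eNorm a ^ 2 := by
  have h1 : a ⬝ᵥ (P * L + Lᵀ * P).mulVec a = -eNorm a ^ 2 := by
    rw [hLyap, eNorm_sq, neg_mulVec, one_mulVec, dotProduct_neg]
  have h2 : a ⬝ᵥ (Lᵀ).mulVec (P.mulVec a) = a ⬝ᵥ P.mulVec (L.mulVec a) := by
    rw [dotProduct_mulVec, vecMul_transpose, dotProduct_mulVec_comm hPsym]
  rw [add_mulVec, dotProduct_add, ← mulVec_mulVec, ← mulVec_mulVec, h2] at h1
  linarith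

/-! ### The `Lᵖ` seminorm on `(0, τ]` -/

/-- The `Lᵖ` seminorm of a scalar signal on `(0, τ]`. -/
def lpN (p τ : ℝ) (h : ℝ → ℝ) : ℝ := (∫ t in Ioc 0 τ, |h t| ^ p) ^ (1 / p)

lemma integrableOn_abs_rpow {p τ : ℝ} (hp : 1 ≤ p) {h : ℝ → ℝ} (hh : Continuous h) :
    IntegrableOn (fun t => |h t| ^ p) (Ioc 0 τ) :=
  (hh.abs.rpow_const fun _ => Or.inr (by linarith)).integrableOn_Ioc

lemma integral_abs_rpow_nonneg (p τ : ℝ) (h : ℝ → ℝ) : 0 ≤ ∫ t in Ioc 0 τ, |h t| ^ p :=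
  integral_nonneg fun _ => Real.rpow_nonneg (abs_nonneg _) _

lemma lpN_nonneg (p τ : ℝ) (h : ℝ → ℝ) : 0 ≤ lpN p τ h :=
  Real.rpow_nonneg (integral_abs_rpow_nonneg p τ h) _

lemma memLp_restrict {p τ : ℝ} (hp : 1 ≤ p) {h : ℝ → ℝ} (hh : Continuous h) :
    MemLp h (ENNReal.ofReal p) (volume.restrict (Ioc 0 τ)) := by
  have hp0 : 0 < p := by linarith
  rw [← integrable_norm_rpow_iff hh.aestronglyMeasurable (by simpa using hp0)
    ENNReal.ofReal_ne_top, ENNReal.toReal_ofReal hp0.le]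
  exact integrableOn_abs_rpow hp hh

lemma lpN_eq_eLpNorm {p τ : ℝ} (hp : 1 ≤ p) {h : ℝ → ℝ} (hh : Continuous h) :
    lpN p τ h = (eLpNorm h (ENNReal.ofReal p) (volume.restrict (Ioc 0 τ))).toReal := by
  have hp0 : 0 < p := by linarith
  rw [(memLp_restrict hp hh).eLpNorm_eq_integral_rpow_norm (by simpa using hp0)
    ENNReal.ofReal_ne_top, ENNReal.toReal_ofReal hp0.le, ENNReal.toReal_ofReal, lpN, one_div]
  · rfl
  · exact Real.rpow_nonneg (integral_abs_rpow_nonneg p τ h) _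

lemma lpN_add_le {p τ : ℝ} (hp : 1 ≤ p) {g h : ℝ → ℝ} (hg : Continuous g) (hh : Continuous h) :
    lpN p τ (g + h) ≤ lpN p τ g + lpN p τ h := by
  rw [lpN_eq_eLpNorm hp (hg.add hh), lpN_eq_eLpNorm hp hg, lpN_eq_eLpNorm hp hh,
    ← ENNReal.toReal_add (memLp_restrict hp hg).eLpNorm_ne_top
      (memLp_restrict hp hh).eLpNorm_ne_top]
  refine ENNReal.toReal_mono (ENNReal.add_ne_top.2 ⟨(memLp_restrict hp hg).eLpNorm_ne_top,
      (memLp_restrict hp hh).eLpNorm_ne_top⟩) ?_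
  exact eLpNorm_add_le hg.aestronglyMeasurable hh.aestronglyMeasurable (by simpa using hp)

lemma lpN_const_mul {p τ c : ℝ} (hp : 1 ≤ p) (hc : 0 ≤ c) (h : ℝ → ℝ) :
    lpN p τ (fun t => c * h t) = c * lpN p τ h := by
  have hp0 : p ≠ 0 := by linarith
  unfold lpN
  simp_rw [abs_mul, abs_of_nonneg hc, Real.mul_rpow hc (abs_nonneg _)]
  rw [integral_const_mul, Real.mul_rpow (Real.rpow_nonneg hc _) (integral_abs_rpow_nonneg p τ h),
    ← Real.rpow_mul hc, mul_one_div_cancel hp0, Real.rpow_one]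

lemma eLp_trunc {n : ℕ} {p τ : ℝ} (hp : 1 ≤ p) (g : ℝ → Fin n → ℝ) :
    eLp p (trunc τ g) = (∫ t in Ioc 0 τ, eNorm (g t) ^ p) ^ (1 / p) := by
  have hp0 : p ≠ 0 := by linarith
  unfold eLp
  congr 1
  have e : (fun t => eNorm (trunc τ g t) ^ p)
      = (Iic τ).indicator fun t => eNorm (g t) ^ p := by
    ext t
    by_cases ht : t ≤ τ
    · simp [trunc, ht]
    · simp [trunc, ht, eNorm_zero, Real.zero_rpow hp0]
  rw [e, setIntegral_indicator measurableSet_Iic, Ioi_inter_Iic]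

lemma eLp_trunc_eq_lpN {n : ℕ} {p τ : ℝ} (hp : 1 ≤ p) (g : ℝ → Fin n → ℝ) :
    eLp p (trunc τ g) = lpN p τ fun t => eNorm (g t) := by
  rw [eLp_trunc hp, lpN]
  simp_rw [abs_of_nonneg (eNorm_nonneg _)]

/-- Only the dominating signal needs to be continuous: it is then integrable, and the integral
of the smaller, nonnegative integrand is bounded (or `0` by convention). -/
lemma eLp_trunc_le {n : ℕ} {p τ : ℝ} (hp : 1 ≤ p) {g : ℝ → Fin n → ℝ} {h : ℝ → ℝ}
    (hh : Continuous h) (hle : ∀ t ∈ Icc 0 τ, eNorm (g t) ≤ h t) :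
    eLp p (trunc τ g) ≤ lpN p τ h := by
  have hp0 : 0 ≤ p := by linarith
  rw [eLp_trunc hp, lpN]
  refine Real.rpow_le_rpow
    (integral_nonneg fun _ => Real.rpow_nonneg (eNorm_nonneg _) _) ?_ (by positivity)
  refine integral_mono_of_nonneg
    (Filter.Eventually.of_forall fun _ => Real.rpow_nonneg (eNorm_nonneg _) _)
    (integrableOn_abs_rpow hp hh) ?_
  refine (ae_restrict_iff' measurableSet_Ioc).2 (Filter.Eventually.of_forall fun t ht => ?_)
  exact Real.rpow_le_rpow (eNorm_nonneg _)
    ((hle t ⟨ht.1.le, ht.2⟩).trans (le_abs_self _)) hp0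

/-! ### The scalar comparison system -/

/-- The solution of `u' = -α u + g`, `u 0 = 0`, by variation of constants. -/
def scal (α : ℝ) (g : ℝ → ℝ) (t : ℝ) : ℝ :=
  Real.exp (-(α * t)) * ∫ s in (0 : ℝ)..t, Real.exp (α * s) * g s

lemma scal_zero (α : ℝ) (g : ℝ → ℝ) : scal α g 0 = 0 := by simp [scal]

lemma scal_nonneg {α : ℝ} {g : ℝ → ℝ} (hg : ∀ t, 0 ≤ g t) {t : ℝ} (ht : 0 ≤ t) :
    0 ≤ scal α g t :=
  mul_nonneg (Real.exp_pos _).le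
    (intervalIntegral.integral_nonneg ht fun s _ => mul_nonneg (Real.exp_pos _).le (hg s))

lemma hasDerivAt_exp_neg (α t : ℝ) :
    HasDerivAt (fun t => Real.exp (-(α * t))) (-α * Real.exp (-(α * t))) t := by
  have h := (((hasDerivAt_id t).const_mul α).neg).exp
  simpa [mul_comm] using h

lemma hasDerivAt_scal (α : ℝ) {g : ℝ → ℝ} (hg : Continuous g) (t : ℝ) :
    HasDerivAt (scal α g) (-α * scal α g t + g t) t := by
  have hc : Continuous fun s => Real.exp (α * s) * g s := by fun_prop
  have h1 := intervalIntegral.integral_hasDerivAt_right (hc.intervalIntegrable 0 t)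
    hc.aestronglyMeasurable.stronglyMeasurableAtFilter hc.continuousAt
  refine ((hasDerivAt_exp_neg α t).mul h1).congr_deriv ?_
  have e : Real.exp (-(α * t)) * (Real.exp (α * t) * g t) = g t := by
    rw [← mul_assoc, ← Real.exp_add]
    simp
  rw [e, scal, mul_assoc]

lemma continuous_scal (α : ℝ) {g : ℝ → ℝ} (hg : Continuous g) : Continuous (scal α g) :=
  continuous_iff_continuousAt.2 fun t => (hasDerivAt_scal α hg t).continuousAt

/-- Weighted Young inequality in the form needed for the energy estimate. -/
lemma rpow_sub_one_mul_le {p x y : ℝ} (hp : 1 ≤ p) (hx : 0 ≤ x) (hy : 0 ≤ y) :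
    p * (x ^ (p - 1) * y) ≤ (p - 1) * x ^ p + y ^ p := by
  have hp0 : 0 < p := by linarith
  have h := Real.geom_mean_le_arith_mean2_weighted (w₁ := (p - 1) / p) (w₂ := 1 / p)
    (div_nonneg (by linarith) hp0.le) (by positivity) (Real.rpow_nonneg hx p)
    (Real.rpow_nonneg hy p) (by field_simp; ring)
  rw [← Real.rpow_mul hx, ← Real.rpow_mul hy, mul_div_cancel₀ _ hp0.ne',
    mul_div_cancel₀ _ hp0.ne', Real.rpow_one] at h
  calc p * (x ^ (p - 1) * y) ≤ p * ((p - 1) / p * x ^ p + 1 / p * y ^ p) :=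
        mul_le_mul_of_nonneg_left h hp0.le
    _ = _ := by field_simp

/-- The scalar system `u' = -α u + g` has `Lᵖ` gain at most `1 / α`: integrate
`(uᵖ)' = -α p uᵖ + p uᵖ⁻¹ g ≤ α ((g / α)ᵖ - uᵖ)` over `[0, τ]`. -/
lemma lpN_scal_le {p τ α : ℝ} (hp : 1 ≤ p) (hτ : 0 < τ) (hα : 0 < α) {g : ℝ → ℝ}
    (hg : Continuous g) (hg0 : ∀ t, 0 ≤ g t) :
    lpN p τ (scal α g) ≤ α⁻¹ * lpN p τ g := by
  have hp0 : 0 < p := by linarith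
  have hu := continuous_scal α hg
  rw [← lpN_const_mul hp (inv_nonneg.2 hα.le)]
  refine Real.rpow_le_rpow (integral_abs_rpow_nonneg _ _ _) ?_ (by positivity)
  have hgα : Continuous fun t => α⁻¹ * g t := by fun_prop
  have hd : ∀ t ∈ uIcc 0 τ, HasDerivAt (fun t => scal α g t ^ p)
      ((-α * scal α g t + g t) * p * scal α g t ^ (p - 1)) t := fun t _ =>
    (hasDerivAt_scal α hg t).rpow_const (Or.inr hp)
  have hcont : Continuous fun t => (-α * scal α g t + g t) * p * scal α g t ^ (p - 1) :=
    (((hu.const_mul _).add hg).mul_const _).mul (hu.rpow_const fun _ => Or.inr (by linarith))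
  have hFTC := intervalIntegral.integral_eq_sub_of_hasDerivAt hd (hcont.intervalIntegrable 0 τ)
  rw [scal_zero, Real.zero_rpow hp0.ne', sub_zero,
    intervalIntegral.integral_of_le hτ.le] at hFTC
  have hpos : 0 ≤ scal α g τ ^ p := Real.rpow_nonneg (scal_nonneg hg0 hτ.le) _
  have hi1 := integrableOn_abs_rpow (τ := τ) hp hgα
  have hi2 := integrableOn_abs_rpow (τ := τ) hp hu
  have hle : ∫ t in Ioc 0 τ, (-α * scal α g t + g t) * p * scal α g t ^ (p - 1)
      ≤ ∫ t in Ioc 0 τ, α * (|α⁻¹ * g t| ^ p - |scal α g t| ^ p) := by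
    refine setIntegral_mono_on hcont.integrableOn_Ioc ((hi1.sub hi2).const_mul α)
      measurableSet_Ioc fun t ht => ?_
    have hut : 0 ≤ scal α g t := scal_nonneg hg0 ht.1.le
    have hgt : 0 ≤ α⁻¹ * g t := mul_nonneg (inv_nonneg.2 hα.le) (hg0 t)
    rw [abs_of_nonneg hut, abs_of_nonneg hgt]
    have hY := mul_le_mul_of_nonneg_left (rpow_sub_one_mul_le hp hut hgt) hα.le
    have hup : scal α g t ^ p = scal α g t ^ (p - 1) * scal α g t := by
      rcases hp.eq_or_lt with rfl | hp1
      · simp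
      · conv_rhs => rw [← Real.rpow_add_one' hut (by linarith)]
        simp
    have e : g t = α * (α⁻¹ * g t) := by field_simp
    calc (-α * scal α g t + g t) * p * scal α g t ^ (p - 1)
        = -α * p * (scal α g t ^ (p - 1) * scal α g t)
          + α * (p * (scal α g t ^ (p - 1) * (α⁻¹ * g t))) := by
          conv_lhs => rw [e]
          ring
      _ ≤ -α * p * (scal α g t ^ (p - 1) * scal α g t)
          + α * ((p - 1) * scal α g t ^ p + (α⁻¹ * g t) ^ p) := by gcongr
      _ = _ := by
          rw [← hup]
          ring
  rw [hFTC, integral_const_mul, integral_sub hi1 hi2] at hle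
  have := nonneg_of_mul_nonneg_right (hpos.trans hle) hα
  linarith

lemma lpN_exp_le {p τ α : ℝ} (hp : 1 ≤ p) (hτ : 0 < τ) (hα : 0 < α) :
    lpN p τ (fun t => Real.exp (-(α * t))) ≤ (1 / (α * p)) ^ (1 / p) := by
  have hp0 : 0 < p := by linarith
  have hαp : 0 < α * p := mul_pos hα hp0
  refine Real.rpow_le_rpow (integral_abs_rpow_nonneg _ _ _) ?_ (by positivity)
  have e : ∀ t : ℝ, |Real.exp (-(α * t))| ^ p = Real.exp (-(α * p * t)) := fun t => by
    rw [Real.abs_exp, ← Real.exp_mul]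
    ring_nf
  simp_rw [e]
  have hd : ∀ t ∈ uIcc 0 τ, HasDerivAt (fun t => -(1 / (α * p)) * Real.exp (-(α * p * t)))
      (Real.exp (-(α * p * t))) t := fun t _ => by
    refine ((hasDerivAt_exp_neg (α * p) t).const_mul (-(1 / (α * p)))).congr_deriv ?_
    field_simp
  have hc : Continuous fun t => Real.exp (-(α * p * t)) := by fun_prop
  rw [← intervalIntegral.integral_of_le hτ.le,
    intervalIntegral.integral_eq_sub_of_hasDerivAt hd (hc.intervalIntegrable 0 τ)]
  have : 0 < 1 / (α * p) * Real.exp (-(α * p * τ)) := by positivity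
  simp only [mul_zero, neg_zero, Real.exp_zero, mul_one]
  linarith

/-- Comparison principle for `w' ≤ -α w + r`, with a constant `d` absorbed: the function
`e^{αt} (w - d - k u)` is nonincreasing. -/
lemma comparison {τ α k d : ℝ} {g w w' : ℝ → ℝ} (hg : Continuous g)
    (hw : ContinuousOn w (Icc 0 τ)) (hd : ∀ t ∈ Ioo 0 τ, HasDerivAt w (w' t) t)
    (hle : ∀ t ∈ Ioo 0 τ, w' t ≤ -α * (w t - d) + k * g t) {t : ℝ} (ht : t ∈ Icc 0 τ) :
    w t ≤ d + Real.exp (-(α * t)) * (w 0 - d) + k * scal α g t := by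
  have hE : ∀ t, HasDerivAt (fun t => Real.exp (α * t)) (α * Real.exp (α * t)) t := fun t => by
    simpa using hasDerivAt_exp_neg (-α) t
  have hder : ∀ t ∈ Ioo 0 τ, HasDerivAt (fun t => Real.exp (α * t) * (w t - d - k * scal α g t))
      (α * Real.exp (α * t) * (w t - d - k * scal α g t)
        + Real.exp (α * t) * (w' t - k * (-α * scal α g t + g t))) t := fun t ht =>
    (hE t).mul (((hd t ht).sub_const d).sub ((hasDerivAt_scal α hg t).const_mul k))
  have hanti : AntitoneOn (fun t => Real.exp (α * t) * (w t - d - k * scal α g t)) (Icc 0 τ) := by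
    apply antitoneOn_of_deriv_nonpos (convex_Icc 0 τ)
    · have hu := continuous_scal α hg
      exact ContinuousOn.mul (by fun_prop)
        ((hw.sub continuousOn_const).sub (hu.const_mul k).continuousOn)
    · rw [interior_Icc]
      exact fun t ht => (hder t ht).differentiableAt.differentiableWithinAt
    · rw [interior_Icc]
      intro t ht
      rw [(hder t ht).deriv]
      have h := mul_nonneg (Real.exp_pos (α * t)).le (sub_nonneg.2 (hle t ht))
      linarith
  have h := hanti ⟨le_rfl, ht.1.trans ht.2⟩ ht ht.1
  simp only [mul_zero, Real.exp_zero, one_mul, scal_zero, sub_zero] at h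
  have h2 := mul_le_mul_of_nonneg_left h (Real.exp_pos (-(α * t))).le
  rw [← mul_assoc, ← Real.exp_add, neg_add_cancel, Real.exp_zero, one_mul] at h2
  linarith

/-! ### The Lyapunov estimate -/

/-- Trajectory bound in the norm `√(aᵀ P a)`. The square root is regularised to
`√(aᵀ P a + d²)` so as to be differentiable where the trajectory vanishes, and then `d → 0`. -/
lemma sqrt_quad_le {n : ℕ} (hn : 0 < n) {L B P : Matrix (Fin n) (Fin n) ℝ} (hPsym : Pᵀ = P)
    (hP : P.PosDef) (hLyap : P * L + Lᵀ * P = -(1 : Matrix (Fin n) (Fin n) ℝ))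
    {τ : ℝ} {f : ℝ → Fin n → ℝ} (hfc : Continuous f) {a : ℝ → Fin n → ℝ}
    (hode : ∀ t ∈ Icc (0:ℝ) τ,
      HasDerivWithinAt a (L.mulVec (a t) + B.mulVec (f t)) (Icc (0:ℝ) τ) t)
    {t : ℝ} (ht : t ∈ Icc 0 τ) :
    √(quad P (a t)) ≤ Real.exp (-((2 * lamMax P)⁻¹ * t)) * √(quad P (a 0))
      + √(lamMax P) * specNorm B * scal (2 * lamMax P)⁻¹ (fun t => eNorm (f t)) t := by
  have hm := (lamMin_pos hn hP).trans_le (lamMin_le_lamMax hn P)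
  set α := (2 * lamMax P)⁻¹ with hα
  set k := √(lamMax P) * specNorm B with hk
  have hac : ContinuousOn a (Icc 0 τ) := fun t ht => (hode t ht).continuousWithinAt
  have hg : Continuous fun t => eNorm (f t) := continuous_eNorm.comp hfc
  have hV : ∀ t ∈ Ioo 0 τ, HasDerivAt (fun t => quad P (a t))
      (-eNorm (a t) ^ 2 + 2 * (a t ⬝ᵥ P.mulVec (B.mulVec (f t)))) t := by
    intro t ht
    have h1 := (hode t ⟨ht.1.le, ht.2.le⟩).hasDerivAt (Icc_mem_nhds ht.1 ht.2)
    have hi := hasDerivAt_pi.1 h1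
    have h2 : HasDerivAt (fun t => quad P (a t))
        (∑ i, ((L.mulVec (a t) + B.mulVec (f t)) i * P.mulVec (a t) i
          + a t i * P.mulVec (L.mulVec (a t) + B.mulVec (f t)) i)) t := by
      unfold quad dotProduct
      refine HasDerivAt.fun_sum fun i _ => (hi i).mul ?_
      unfold mulVec dotProduct
      exact HasDerivAt.fun_sum fun j _ => (hi j).const_mul _
    refine h2.congr_deriv ?_
    rw [Finset.sum_add_distrib]
    change (L.mulVec (a t) + B.mulVec (f t)) ⬝ᵥ P.mulVec (a t)
      + a t ⬝ᵥ P.mulVec (L.mulVec (a t) + B.mulVec (f t)) = _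
    rw [dotProduct_mulVec_comm hPsym, mulVec_add, dotProduct_add,
      ← lyapunov_dotProduct hPsym hLyap]
    ring
  have key : ∀ d : ℝ, 0 < d → √(quad P (a t)) ≤ Real.exp (-(α * t)) * √(quad P (a 0))
      + k * scal α (fun t => eNorm (f t)) t + d := by
    intro d hd
    have hpos : ∀ t, 0 < quad P (a t) + d ^ 2 := fun t =>
      add_pos_of_nonneg_of_pos (quad_nonneg hP _) (by positivity)
    have hcmp := comparison (α := α) (k := k) (d := d) (w := fun t => √(quad P (a t) + d ^ 2)) hg
      (((continuous_quad P).comp_continuousOn hac).add continuousOn_const).sqrt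
      (fun t ht => ((hV t ht).add_const (d ^ 2)).sqrt (hpos t).ne') ?_ ht
    · have h0 : √(quad P (a 0) + d ^ 2) ≤ √(quad P (a 0)) + d := by
        refine Real.sqrt_le_iff.2 ⟨by positivity, ?_⟩
        rw [add_sq, Real.sq_sqrt (quad_nonneg hP (a 0))]
        have : 0 ≤ 2 * √(quad P (a 0)) * d := by positivity
        linarith
      have h1 : √(quad P (a t)) ≤ √(quad P (a t) + d ^ 2) :=
        Real.sqrt_le_sqrt (by linarith [sq_nonneg d])
      have h2 := mul_le_mul_of_nonneg_left (sub_le_iff_le_add.2 h0) (Real.exp_pos (-(α * t))).le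
      linarith
    · intro s hs
      have hs1 : √(quad P (a s)) ≤ √(quad P (a s) + d ^ 2) :=
        Real.sqrt_le_sqrt (by linarith [sq_nonneg d])
      have hs2 : √(quad P (a s) + d ^ 2) ^ 2 = quad P (a s) + d ^ 2 := Real.sq_sqrt (hpos s).le
      have hs3 : d ≤ √(quad P (a s) + d ^ 2) :=
        Real.le_sqrt_of_sq_le (by linarith [quad_nonneg hP (a s)])
      have hs4 := dotProduct_mulVec_le hPsym hP (a s) (B.mulVec (f s))
      have hs5 : √(quad P (a s)) * (√(lamMax P) * eNorm (B.mulVec (f s)))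
          ≤ √(quad P (a s) + d ^ 2) * (k * eNorm (f s)) := by
        rw [hk, mul_assoc]
        exact mul_le_mul hs1 (mul_le_mul_of_nonneg_left (eNorm_mulVec_le B _)
          (Real.sqrt_nonneg _)) (mul_nonneg (Real.sqrt_nonneg _) (eNorm_nonneg _))
          (Real.sqrt_nonneg _)
      have hs6 : 2 * α * quad P (a s) ≤ eNorm (a s) ^ 2 := by
        have := quad_le P (a s)
        rw [hα, mul_inv, ← mul_assoc, mul_inv_cancel₀ two_ne_zero, one_mul,
          inv_mul_le_iff₀ hm]
        exact this
      have hα0 : 0 < α := by positivity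
      set W := √(quad P (a s) + d ^ 2)
      have hW : 0 < W := hd.trans_le hs3
      rw [div_le_iff₀ (by positivity)]
      -- Since `d ≤ W`, one has `quad P (a s) = W² - d² ≥ W (W - d)`.
      have h7 : 0 ≤ α * (d * (W - d)) := by
        have := sub_nonneg.2 hs3
        positivity
      have h8 : quad P (a s) = W ^ 2 - d ^ 2 := by linarith
      rw [h8] at hs6
      nlinarith
  exact le_of_forall_pos_le_add key

/-- **Linear finite-gain Lp bound** (Khalil, Corollary 5.2, case p ∈ [1, ∞)):
for the LTI system ȧ = La + Bf, y = Ca + Df with L Hurwitz, the truncated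
output satisfies ‖y_τ‖_{Lp} ≤ γ_cor‖f_τ‖_{Lp} + β_cor, where
γ_cor = ‖D‖₂ + 2λmax²(P_cor)‖B‖₂‖C‖₂/λmin(P_cor) and
β_cor = (2λmax(P_cor)/p)^{1/p}‖C‖₂‖a₀‖√(λmax(P_cor)/λmin(P_cor)). -/
theorem linear_Lp_gain
    {n : ℕ} (L B C D : Matrix (Fin n) (Fin n) ℝ)
    (hHurwitz : ∀ z ∈ spectrum ℂ (L.map (algebraMap ℝ ℂ)), z.re < 0)
    (Pcor : Matrix (Fin n) (Fin n) ℝ) (hPsym : Pcorᵀ = Pcor) (hPpd : Pcor.PosDef)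
    (hLyap : Pcor * L + Lᵀ * Pcor = -(1 : Matrix (Fin n) (Fin n) ℝ))
    (τ : ℝ) (hτ : 0 < τ)
    (f : ℝ → Fin n → ℝ) (hfc : Continuous f)
    (a₀ : Fin n → ℝ) (a : ℝ → Fin n → ℝ)
    (hode : ∀ t ∈ Icc (0:ℝ) τ,
      HasDerivWithinAt a (L.mulVec (a t) + B.mulVec (f t)) (Icc (0:ℝ) τ) t)
    (hinit : a 0 = a₀)
    (p : ℝ) (hp : 1 ≤ p) :
    eLp p (trunc τ (fun t => C.mulVec (a t) + D.mulVec (f t))) ≤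
      (specNorm D + 2 * lamMax Pcor ^ 2 * specNorm B * specNorm C / lamMin Pcor) *
        eLp p (trunc τ f)
      + (2 * lamMax Pcor / p) ^ (1/p) * specNorm C * eNorm a₀ *
          Real.sqrt (lamMax Pcor / lamMin Pcor) := by
  have hp0 : 0 < p := by linarith
  -- In dimension `0` every norm and both extreme eigenvalues vanish.
  rcases Nat.eq_zero_or_pos n with rfl | hn
  · have h0 : ∀ v : Fin 0 → ℝ, eNorm v = 0 := fun v => by simp [eNorm]
    simp [eLp, h0, Real.zero_rpow hp0.ne', Real.zero_rpow (inv_pos.2 hp0).ne']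
  have hmin := lamMin_pos hn hPpd
  have hmm := lamMin_le_lamMax hn Pcor
  have hmax := hmin.trans_le hmm
  set m := lamMin Pcor
  set M := lamMax Pcor
  set g : ℝ → ℝ := fun t => eNorm (f t)
  set α := (2 * M)⁻¹ with hα
  have hα0 : 0 < α := by positivity
  have hg : Continuous g := continuous_eNorm.comp hfc
  have hu := continuous_scal α hg
  have hB := specNorm_nonneg B
  have hC := specNorm_nonneg C
  have hD := specNorm_nonneg D
  have ha0 := eNorm_nonneg a₀
  have hgN := lpN_nonneg p τ g
  set c1 := specNorm C * (√M * eNorm a₀ / √m) with hc1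
  set c2 := specNorm C * (√M * specNorm B / √m) with hc2
  have hm' : 0 < √m := Real.sqrt_pos.2 hmin
  have hc10 : 0 ≤ c1 := by positivity
  have hc20 : 0 ≤ c2 := by positivity
  have hpt : ∀ t ∈ Icc 0 τ, eNorm (C.mulVec (a t) + D.mulVec (f t))
      ≤ (c1 * Real.exp (-(α * t)) + c2 * scal α g t) + specNorm D * g t := by
    intro t ht
    have h1 := sqrt_quad_le hn hPsym hPpd hLyap hfc hode ht
    have h2 : √m * eNorm (a t) ≤ √(quad Pcor (a t)) := by
      have h := Real.sqrt_le_sqrt (le_quad Pcor (a t))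
      rwa [Real.sqrt_mul' _ (sq_nonneg _), Real.sqrt_sq (eNorm_nonneg _)] at h
    have h3 : √(quad Pcor (a 0)) ≤ √M * eNorm a₀ := by
      have h := Real.sqrt_le_sqrt (quad_le Pcor (a 0))
      rw [Real.sqrt_mul' _ (sq_nonneg _), Real.sqrt_sq (eNorm_nonneg _)] at h
      rwa [← hinit]
    have h4 : eNorm (a t) ≤ (Real.exp (-(α * t)) * (√M * eNorm a₀)
        + √M * specNorm B * scal α g t) / √m := by
      rw [le_div_iff₀ hm', mul_comm]
      refine (h2.trans h1).trans ?_
      gcongr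
    calc eNorm (C.mulVec (a t) + D.mulVec (f t))
        ≤ specNorm C * eNorm (a t) + specNorm D * eNorm (f t) :=
          (eNorm_add_le _ _).trans (add_le_add (eNorm_mulVec_le C _) (eNorm_mulVec_le D _))
      _ ≤ specNorm C * ((Real.exp (-(α * t)) * (√M * eNorm a₀)
            + √M * specNorm B * scal α g t) / √m) + specNorm D * eNorm (f t) := by gcongr
      _ = _ := by
          rw [hc1, hc2]
          ring
  have hce : Continuous fun t => c1 * Real.exp (-(α * t)) := by fun_prop
  have hcu : Continuous fun t => c2 * scal α g t := hu.const_mul c2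
  have hcg : Continuous fun t => specNorm D * g t := hg.const_mul _
  have hN := eLp_trunc_le hp ((hce.add hcu).add hcg) hpt
  have hA := lpN_add_le (τ := τ) hp (hce.add hcu) hcg
  have hA' := lpN_add_le (τ := τ) hp hce hcu
  rw [lpN_const_mul hp hD] at hA
  rw [lpN_const_mul hp hc10, lpN_const_mul hp hc20] at hA'
  have hE := mul_le_mul_of_nonneg_left (lpN_exp_le hp hτ hα0) hc10
  have hU := mul_le_mul_of_nonneg_left
    (lpN_scal_le hp hτ hα0 hg fun t => eNorm_nonneg (f t)) hc20
  have e1 : 1 / (α * p) = 2 * M / p := by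
    rw [hα]
    field_simp
  have e2 : c1 = specNorm C * eNorm a₀ * √(M / m) := by
    rw [hc1, Real.sqrt_div hmax.le]
    ring
  -- `√M / √m ≤ M / m`, as `m ≤ M`.
  have e3 : c2 * α⁻¹ ≤ 2 * M ^ 2 * specNorm B * specNorm C / m := by
    have hr : √M / √m ≤ M / m := by
      rw [← Real.sqrt_div hmax.le]
      have h1 : 1 ≤ M / m := (one_le_div hmin).2 hmm
      rw [Real.sqrt_le_left (by positivity)]
      nlinarith
    calc c2 * α⁻¹ = (√M / √m) * (2 * M * specNorm B * specNorm C) := by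
          rw [hc2, hα, inv_inv]
          ring
      _ ≤ (M / m) * (2 * M * specNorm B * specNorm C) := by gcongr
      _ = _ := by ring
  have e4 := mul_le_mul_of_nonneg_right e3 hgN
  rw [e1] at hE
  rw [eLp_trunc_eq_lpN hp f]
  calc _ ≤ _ := hN
    _ ≤ _ := hA
    _ ≤ c1 * (2 * M / p) ^ (1 / p) + c2 * (α⁻¹ * lpN p τ g) + specNorm D * lpN p τ g := by
        linarith
    _ ≤ c1 * (2 * M / p) ^ (1 / p)
          + 2 * M ^ 2 * specNorm B * specNorm C / m * lpN p τ g + specNorm D * lpN p τ g := by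
        linarith
    _ = _ := by
        rw [e2]
        ring
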